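/- Let K = {Σ_{n=1}^∞ aₙ 3^{−n} : aₙ ∈ {0,2} for all n} ⊆ [0,1] be the middle-thirds Cantor set and let L = {x + iy : x, y ∈ K} ⊆ ℂ. Then every function f holomorphic on ℂ∖L, such that f and its derivative f′ extend continuously to ℂ and f has a finite limit at infinity, is constant; that is, the 1-continuous analytic capacity a_1(L) is zero. -/

import Mathlib

open Filter Set

/-- The middle-thirds Cantor set `K = {Σ_{n=1}^∞ aₙ 3^{−n} : aₙ ∈ {0,2}} ⊆ [0,1]`. -/
def middleThirdsCantor : Set ℝ :=
  {x : ℝ | ∃ a : ℕ → ℝ, (∀ n, a n = 0 ∨ a n = 2) ∧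
    HasSum (fun n => a n / 3 ^ (n + 1)) x}

/-- The product `L = K × K ⊆ ℂ` of the middle-thirds Cantor set with itself. -/
def cantorSquare : Set ℂ :=
  {z : ℂ | z.re ∈ middleThirdsCantor ∧ z.im ∈ middleThirdsCantor}

theorem mtc_eq : middleThirdsCantor = cantorSet := by
  rw [cantorSet_eq_zero_two_ofDigits]
  ext x
  constructor
  · rintro ⟨a, ha, hs⟩
    refine ⟨fun n => if a n = 0 then 0 else 2, ?_, ?_⟩
    · intro n
      dsimp only
      split_ifs <;> decide
    · rw [Real.ofDigits, ← hs.tsum_eq]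
      congr 1
      ext n
      rcases ha n with h | h <;> simp [Real.ofDigitsTerm, h, div_eq_mul_inv]
  · rintro ⟨a, ha, hs⟩
    refine ⟨fun n => (a n : ℕ), ?_, ?_⟩
    · intro n
      have := ha n
      dsimp only
      generalize a n = d at this
      fin_cases d <;> simp at this ⊢
    · have h := (Real.summable_ofDigitsTerm (digits := a)).hasSum
      rw [← hs]
      have e : Real.ofDigitsTerm a = fun n => ((a n : ℕ) : ℝ) / 3 ^ (n + 1) := by
        ext n
        simp [Real.ofDigitsTerm, div_eq_mul_inv]
      rw [Real.ofDigits]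
      rw [e] at h ⊢
      exact h

theorem cantor_null : MeasureTheory.volume cantorSet = 0 := by
  set v := MeasureTheory.volume cantorSet with hv
  have hfin : v ≠ ⊤ := isCompact_cantorSet.measure_lt_top.ne
  have h3 : ENNReal.ofReal |(1/3 : ℝ)| = 3⁻¹ := by
    rw [abs_of_pos (by norm_num), one_div, ENNReal.ofReal_inv_of_pos (by norm_num)]
    norm_num
  have h1 : MeasureTheory.volume ((· / 3) '' cantorSet : Set ℝ) = 3⁻¹ * v := by
    have : ((· / 3) '' cantorSet : Set ℝ) = AffineMap.homothety (0:ℝ) (1/3 : ℝ) '' cantorSet := by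
      congr 1; ext x; simp [AffineMap.homothety_apply]; ring
    rw [this, MeasureTheory.Measure.addHaar_image_homothety]
    simp only [Module.finrank_self, pow_one, h3, hv]
  have h2 : MeasureTheory.volume ((fun x => (2 + x) / 3) '' cantorSet : Set ℝ) = 3⁻¹ * v := by
    have : ((fun x => (2 + x) / 3) '' cantorSet : Set ℝ)
        = AffineMap.homothety (1:ℝ) (1/3 : ℝ) '' cantorSet := by
      congr 1; ext x; simp [AffineMap.homothety_apply]; ring
    rw [this, MeasureTheory.Measure.addHaar_image_homothety]
    simp only [Module.finrank_self, pow_one, h3, hv]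
  have hle : v ≤ 3⁻¹ * v + 3⁻¹ * v := by
    calc v = _ := by rw [hv]; conv_lhs => rw [cantorSet_eq_union_halves]
      _ ≤ _ := MeasureTheory.measure_union_le _ _
      _ = _ := by rw [h1, h2]
  lift v to NNReal using hfin with w
  have : ((3⁻¹ : NNReal) : ENNReal) = 3⁻¹ := by simp
  rw [← this] at hle
  norm_cast at hle ⊢
  have h4 : (w : ℝ) ≤ 3⁻¹ * w + 3⁻¹ * w := by exact_mod_cast hle
  have h5 := w.2
  apply NNReal.eq
  simp only [NNReal.val_eq_coe] at h5
  simp only [NNReal.coe_zero]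
  linarith

theorem mtc_dense : Dense (middleThirdsCantorᶜ) := by
  rw [mtc_eq, ← interior_eq_empty_iff_dense_compl]
  exact MeasureTheory.Measure.interior_eq_empty_of_null cantor_null

theorem cantorSquare_compact : IsCompact cantorSquare := by
  have : IsCompact (middleThirdsCantor ×ℂ middleThirdsCantor) := by
    rw [mtc_eq]; exact isCompact_cantorSet.reProdIm isCompact_cantorSet
  exact this

/-- Lines avoiding the set, passage to the limit. -/
theorem line_integral (F G : ℂ → ℂ) (hF : Continuous F) (hG : Continuous G)
    (hd : ∀ z ∈ cantorSquareᶜ, HasDerivAt F (G z) z) (u v : ℂ)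
    (huv : ∀ y : ℝ, y ∉ middleThirdsCantor → ∀ t : ℝ, t * u + y * v ∈ cantorSquareᶜ)
    (a b y : ℝ) :
    F (b * u + y * v) - F (a * u + y * v) = ∫ t in a..b, G (t * u + y * v) * u := by
  have hc : IsClosed {y : ℝ | F (b * u + y * v) - F (a * u + y * v)
      = ∫ t in a..b, G (t * u + y * v) * u} := by
    apply isClosed_eq
    · fun_prop
    · apply intervalIntegral.continuous_parametric_intervalIntegral_of_continuous'
      simp only [Function.uncurry_def]
      fun_prop
  have hsub : middleThirdsCantorᶜ ⊆ {y : ℝ | F (b * u + y * v) - F (a * u + y * v)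
      = ∫ t in a..b, G (t * u + y * v) * u} := by
    intro y hy
    rw [mem_setOf_eq]
    symm
    refine intervalIntegral.integral_eq_sub_of_hasDerivAt
      (f := fun t : ℝ => F (t * u + y * v)) ?_ ?_
    · intro t _
      have h1 : HasDerivAt (fun t : ℝ => (t : ℂ) * u + y * v) u t := by
        simpa using ((Complex.ofRealCLM.hasDerivAt (x := t)).mul_const u).add_const (y * v)
      exact (hd _ (huv y hy t)).comp t h1
    · apply Continuous.intervalIntegrable
      fun_prop
  have := hc.closure_subset_iff.2 hsub
  rw [mtc_dense.closure_eq] at this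
  exact this (mem_univ y)

theorem ext_hasDerivAt (F G : ℂ → ℂ) (hF : Continuous F) (hG : Continuous G)
    (hd : ∀ z ∈ cantorSquareᶜ, HasDerivAt F (G z) z) (z : ℂ) : HasDerivAt F (G z) z := by
  rw [hasDerivAt_iff_isLittleO, Asymptotics.isLittleO_iff]
  intro c hc
  obtain ⟨δ, hδ, hball⟩ := Metric.continuous_iff.1 hG z (c / 2) (by positivity)
  filter_upwards [Metric.ball_mem_nhds z hδ] with w hw
  have H := line_integral F G hF hG hd 1 Complex.I
    (fun y hy t h => hy (by simpa using h.2)) z.re w.re w.im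
  have V := line_integral F G hF hG hd Complex.I 1
    (fun y hy t h => hy (by simpa using h.1)) z.im w.im z.re
  have e1 : (w.re : ℂ) * 1 + w.im * Complex.I = w := by simp
  have e2 : (z.im : ℂ) * Complex.I + z.re * 1 = z := by
    rw [mul_one, add_comm]; simp
  have e3 : (w.im : ℂ) * Complex.I + z.re * 1 = z.re * 1 + w.im * Complex.I := add_comm _ _
  rw [e1] at H
  rw [e2, e3] at V
  have hw' : ‖w - z‖ < δ := by rwa [← dist_eq_norm]
  have hre : |w.re - z.re| ≤ ‖w - z‖ := by simpa using Complex.abs_re_le_norm (w - z)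
  have him : |w.im - z.im| ≤ ‖w - z‖ := by simpa using Complex.abs_im_le_norm (w - z)
  have B1 : ‖∫ t in z.re..w.re, (G (t * 1 + w.im * Complex.I) * 1 - G z * 1)‖
      ≤ c / 2 * |w.re - z.re| := by
    apply intervalIntegral.norm_integral_le_of_norm_le_const
    intro t ht
    rw [← sub_mul, mul_one, ← dist_eq_norm]
    refine (hball _ (lt_of_le_of_lt ?_ hw')).le
    rw [dist_eq_norm, Complex.norm_def, Complex.norm_def]
    apply Real.sqrt_le_sqrt
    simp only [Complex.normSq_apply]
    have : |t - z.re| ≤ |w.re - z.re| := by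
      apply Set.abs_sub_left_of_mem_uIcc
      exact Set.uIoc_subset_uIcc ht
    have := sq_le_sq.2 this
    simp
    nlinarith
  have B2 : ‖∫ t in z.im..w.im, (G (t * Complex.I + z.re * 1) * Complex.I - G z * Complex.I)‖
      ≤ c / 2 * |w.im - z.im| := by
    apply intervalIntegral.norm_integral_le_of_norm_le_const
    intro t ht
    rw [← sub_mul, norm_mul, Complex.norm_I, mul_one, ← dist_eq_norm]
    refine (hball _ (lt_of_le_of_lt ?_ hw')).le
    rw [dist_eq_norm, Complex.norm_def, Complex.norm_def]
    apply Real.sqrt_le_sqrt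
    simp only [Complex.normSq_apply]
    have : |t - z.im| ≤ |w.im - z.im| := by
      apply Set.abs_sub_left_of_mem_uIcc
      exact Set.uIoc_subset_uIcc ht
    have := sq_le_sq.2 this
    simp
    nlinarith [mul_self_nonneg (w.re - z.re)]
  rw [intervalIntegral.integral_sub
    (Continuous.intervalIntegrable (by fun_prop) _ _) (by simp), ← H,
    intervalIntegral.integral_const] at B1
  rw [intervalIntegral.integral_sub
    (Continuous.intervalIntegrable (by fun_prop) _ _) (by simp), ← V,
    intervalIntegral.integral_const] at B2
  have key : F w - F z - (w - z) • G z
      = (F w - F (z.re * 1 + w.im * Complex.I) - (w.re - z.re) • (G z * 1))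
        + (F (z.re * 1 + w.im * Complex.I) - F z - (w.im - z.im) • (G z * Complex.I)) := by
    have : w - z = ((w.re - z.re : ℝ) : ℂ) + ((w.im - z.im : ℝ) : ℂ) * Complex.I := by
      apply Complex.ext <;> simp
    rw [this]
    simp only [Complex.real_smul, smul_eq_mul]
    ring
  rw [key]
  refine (norm_add_le _ _).trans ?_
  nlinarith

/-- Let `K` be the middle-thirds Cantor set and `L = K × K ⊆ ℂ`. Then every function
`f` holomorphic on `ℂ \ L` such that `f` and `f'` extend continuously to `ℂ` and `f`
has a finite limit at infinity is constant; that is, `a₁(L) = 0`. -/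
theorem a1_cantorSquare_zero :
    ∀ f : ℂ → ℂ, DifferentiableOn ℂ f cantorSquareᶜ →
      (∃ g : ℂ → ℂ, Continuous g ∧ Set.EqOn g f cantorSquareᶜ) →
      (∃ g : ℂ → ℂ, Continuous g ∧ Set.EqOn g (deriv f) cantorSquareᶜ) →
      (∃ c : ℂ, Tendsto f (cocompact ℂ) (nhds c)) →
      ∃ c : ℂ, ∀ z ∈ cantorSquareᶜ, f z = c := by
  rintro f hf ⟨F, hF, hFf⟩ ⟨G, hG, hGf⟩ ⟨c, hc⟩
  have hopen : IsOpen cantorSquareᶜ := cantorSquare_compact.isClosed.isOpen_compl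
  have hd : ∀ z ∈ cantorSquareᶜ, HasDerivAt F (G z) z := by
    intro z hz
    have hn := hopen.mem_nhds hz
    rw [hGf hz]
    exact (hf.differentiableAt hn).hasDerivAt.congr_of_eventuallyEq
      (hFf.eventuallyEq_of_mem hn)
  have hdiff : Differentiable ℂ F := fun z => (ext_hasDerivAt F G hF hG hd z).differentiableAt
  have hFc : Tendsto F (cocompact ℂ) (nhds c) :=
    hc.congr' (hFf.symm.eventuallyEq_of_mem cantorSquare_compact.compl_mem_cocompact)
  refine ⟨c, fun z hz => ?_⟩
  rw [← hFf hz]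
  exact hdiff.apply_eq_of_tendsto_cocompact z hFc
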